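/- Let Y : [0,1] → ℝ be any function, n ≥ 1, κ ≥ 0, and define F̂(s,t) := (Y(t)−Y(s))/(n^{1/2}(t−s)), ℓ̂(x) := sup_{0 ≤ s < t ≤ x} ( F̂(s,t) − (Γ(t−s)+κ)/(n(t−s))^{1/2} ), û(x) := inf_{x ≤ s < t ≤ 1} ( F̂(s,t) + (Γ(t−s)+κ)/(n(t−s))^{1/2} ). Then for every ε ∈ (0,1] and x ∈ [0,1−ε]: û(x) − ℓ̂(x+ε) ≤ ((8 log(e/ε))^{1/2} + 2κ)/(nε)^{1/2}. Consequently, if ℓ̂ ≤ û on [0,1], then D_ε(ℓ̂,û) ≤ ((8 log(e/ε))^{1/2} + 2κ)/(nε)^{1/2} for every ε ∈ (0,1], and there exist numbers c_n (depending only on κ) with c_n n^{1/3} → 0 such that d_L(ℓ̂,û) ≤ (8/3)^{1/3}(log n/n)^{1/3} + c_n. -/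

import Mathlib

/-!
The pair `(s, t) = (x, x + ε)` is admissible both in the infimum defining `û(x)` and in the
supremum defining `ℓ̂(x + ε)`. The data term `F̂(x, x + ε)` cancels in the difference, which
leaves `2 (Γ(ε) + κ) / (nε)^{1/2}` (`uhat_le`, `le_lhat`, `two_mul_halfWidth`). Together with
the monotonicity of `ℓ̂` this yields both inequalities in the definition of `D_ε`
(`band_bounds`).

For the Lévy distance one needs an `ε` with `(8 log(e/ε))^{1/2} + 2κ ≤ ε (nε)^{1/2}`. Writing
`ε = n^{-1/3} y` with `y ≥ 1`, we have `log(e/ε) ≤ 1 + (log n)/3`, so it suffices to take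
`y^{3/2} = r := ((8/3) log n + 8)^{1/2} + 2κ` (`levyRadius_spec`). With
`L = ((8/3) log n)^{1/2}` and `K = 8^{1/2} + 2κ` we have `L ≤ r ≤ L + K`, hence
`0 ≤ r^{2/3} - L^{2/3} ≤ K L^{-1/3} → 0`, which is the claim on `c_n` (`tendsto_remainder`).
-/

open MeasureTheory Filter Set
open scoped ENNReal

/-- `Γ(u) = (2 log(e/u))^{1/2}`. -/
noncomputable def Gam (u : ℝ) : ℝ := Real.sqrt (2 * Real.log (Real.exp 1 / u))

/-- `F̂(s,t) = (Y(t) - Y(s)) / (n^{1/2} (t - s))`. -/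
noncomputable def Fhat (n : ℕ) (Y : ℝ → ℝ) (s t : ℝ) : ℝ :=
  (Y t - Y s) / (Real.sqrt n * (t - s))

/-- Lower bound `ℓ̂(x) = sup_{0 ≤ s < t ≤ x} ( F̂(s,t) - (Γ(t-s) + κ)/(n (t-s))^{1/2} )`. -/
noncomputable def lhatIso (n : ℕ) (κ : ℝ) (Y : ℝ → ℝ) (x : ℝ) : EReal :=
  ⨆ p : {q : ℝ × ℝ // 0 ≤ q.1 ∧ q.1 < q.2 ∧ q.2 ≤ x},
    ((Fhat n Y (p : ℝ × ℝ).1 (p : ℝ × ℝ).2 -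
      (Gam ((p : ℝ × ℝ).2 - (p : ℝ × ℝ).1) + κ) /
        Real.sqrt (n * ((p : ℝ × ℝ).2 - (p : ℝ × ℝ).1)) : ℝ) : EReal)

/-- Upper bound `û(x) = inf_{x ≤ s < t ≤ 1} ( F̂(s,t) + (Γ(t-s) + κ)/(n (t-s))^{1/2} )`. -/
noncomputable def uhatIso (n : ℕ) (κ : ℝ) (Y : ℝ → ℝ) (x : ℝ) : EReal :=
  ⨅ p : {q : ℝ × ℝ // x ≤ q.1 ∧ q.1 < q.2 ∧ q.2 ≤ 1},
    ((Fhat n Y (p : ℝ × ℝ).1 (p : ℝ × ℝ).2 +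
      (Gam ((p : ℝ × ℝ).2 - (p : ℝ × ℝ).1) + κ) /
        Real.sqrt (n * ((p : ℝ × ℝ).2 - (p : ℝ × ℝ).1)) : ℝ) : EReal)

/-- `D_ε(g,h) = inf{λ ≥ 0 : g ≤ h(· + ε) + λ and h ≤ g(· + ε) + λ on [0, 1-ε]}`,
as an element of `[0,∞]`. -/
noncomputable def Deps (ε : ℝ) (g h : ℝ → EReal) : ℝ≥0∞ :=
  sInf {l : ℝ≥0∞ | ∃ lr : ℝ, 0 ≤ lr ∧ l = ENNReal.ofReal lr ∧
    ∀ x ∈ Set.Icc (0:ℝ) (1 - ε),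
      g x ≤ h (x + ε) + (lr : EReal) ∧ h x ≤ g (x + ε) + (lr : EReal)}

/-- The Lévy distance `d_L(g,h) = inf{ε > 0 : g ≤ h(· + ε) + ε and
h ≤ g(· + ε) + ε on [0, 1-ε]}`, as an element of `[0,∞]`. -/
noncomputable def dLevy (g h : ℝ → EReal) : ℝ≥0∞ :=
  sInf {l : ℝ≥0∞ | ∃ e : ℝ, 0 < e ∧ l = ENNReal.ofReal e ∧
    ∀ x ∈ Set.Icc (0:ℝ) (1 - e),
      g x ≤ h (x + e) + (e : EReal) ∧ h x ≤ g (x + e) + (e : EReal)}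

lemma le_lhat (n : ℕ) (κ : ℝ) (Y : ℝ → ℝ) {ε x : ℝ} (hε : 0 < ε) (hx : 0 ≤ x) :
    ((Fhat n Y x (x + ε) - (Gam ε + κ) / Real.sqrt (n * ε) : ℝ) : EReal) ≤
      lhatIso n κ Y (x + ε) := by
  unfold lhatIso
  refine le_trans (le_of_eq ?_) (le_iSup _ ⟨(x, x + ε), hx, by simpa using hε, le_rfl⟩)
  simp

lemma uhat_le (n : ℕ) (κ : ℝ) (Y : ℝ → ℝ) {ε x : ℝ} (hε : 0 < ε) (hx : x + ε ≤ 1) :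
    uhatIso n κ Y x ≤
      ((Fhat n Y x (x + ε) + (Gam ε + κ) / Real.sqrt (n * ε) : ℝ) : EReal) := by
  unfold uhatIso
  refine le_trans (iInf_le _ ⟨(x, x + ε), le_rfl, by simpa using hε, hx⟩) (le_of_eq ?_)
  simp

lemma lhat_mono (n : ℕ) (κ : ℝ) (Y : ℝ → ℝ) {x y : ℝ} (h : x ≤ y) :
    lhatIso n κ Y x ≤ lhatIso n κ Y y := by
  unfold lhatIso
  refine iSup_le fun p => ?_
  exact le_iSup (fun p : {q : ℝ × ℝ // 0 ≤ q.1 ∧ q.1 < q.2 ∧ q.2 ≤ y} =>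
    ((Fhat n Y (p : ℝ × ℝ).1 (p : ℝ × ℝ).2 -
      (Gam ((p : ℝ × ℝ).2 - (p : ℝ × ℝ).1) + κ) /
        Real.sqrt (n * ((p : ℝ × ℝ).2 - (p : ℝ × ℝ).1)) : ℝ) : EReal))
    ⟨p.1, p.2.1, p.2.2.1, p.2.2.2.trans h⟩

lemma two_mul_halfWidth (n : ℕ) (κ ε : ℝ) :
    (Real.sqrt (8 * Real.log (Real.exp 1 / ε)) + 2 * κ) / Real.sqrt (n * ε) =
      2 * ((Gam ε + κ) / Real.sqrt (n * ε)) := by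
  have h : Real.sqrt (8 * Real.log (Real.exp 1 / ε)) = 2 * Gam ε := by
    rw [Gam, show 8 * Real.log (Real.exp 1 / ε) = 2 ^ 2 * (2 * Real.log (Real.exp 1 / ε)) by ring,
      Real.sqrt_mul (by positivity), Real.sqrt_sq (by norm_num)]
  rw [h]; ring

/-- The two inequalities in the definitions of `D_ε` and `d_L`, for any level `l` that is at
least the width bound at scale `ε`. -/
lemma band_bounds (n : ℕ) {κ : ℝ} (hκ : 0 ≤ κ) (Y : ℝ → ℝ)
    (hlu : ∀ x ∈ Set.Icc (0:ℝ) 1, lhatIso n κ Y x ≤ uhatIso n κ Y x)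
    {ε l : ℝ} (hε : 0 < ε)
    (hl : (Real.sqrt (8 * Real.log (Real.exp 1 / ε)) + 2 * κ) / Real.sqrt (n * ε) ≤ l)
    {x : ℝ} (hx : x ∈ Set.Icc (0:ℝ) (1 - ε)) :
    lhatIso n κ Y x ≤ uhatIso n κ Y (x + ε) + (l : EReal) ∧
      uhatIso n κ Y x ≤ lhatIso n κ Y (x + ε) + (l : EReal) := by
  obtain ⟨hx0, hx1⟩ := hx
  constructor
  · have hl0 : (0:ℝ) ≤ l := le_trans (by positivity) hl
    calc lhatIso n κ Y x ≤ lhatIso n κ Y (x + ε) := lhat_mono n κ Y (by linarith)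
      _ ≤ uhatIso n κ Y (x + ε) := hlu _ ⟨by linarith, by linarith⟩
      _ = uhatIso n κ Y (x + ε) + 0 := (add_zero _).symm
      _ ≤ _ := by gcongr; exact_mod_cast hl0
  · refine (uhat_le n κ Y hε (by linarith)).trans ?_
    refine le_trans ?_ (add_le_add_left (le_lhat n κ Y hε hx0) _)
    rw [two_mul_halfWidth] at hl
    rw [← EReal.coe_add, EReal.coe_le_coe_iff]
    linarith

/-- The quantity `r = ((8/3) log n + 8)^{1/2} + 2κ`. -/
noncomputable def levyNum (κ : ℝ) (n : ℕ) : ℝ := Real.sqrt (8/3 * Real.log n + 8) + 2 * κ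

/-- The radius `ε = n^{-1/3} r^{2/3}` at which the width bound is at most `ε`. -/
noncomputable def levyRadius (κ : ℝ) (n : ℕ) : ℝ :=
  (n : ℝ) ^ (-(1:ℝ)/3) * levyNum κ n ^ ((2:ℝ)/3)

lemma one_le_levyNum {κ : ℝ} (hκ : 0 ≤ κ) (n : ℕ) : 1 ≤ levyNum κ n := by
  have h := Real.log_natCast_nonneg n
  have : 1 ≤ Real.sqrt (8/3 * Real.log n + 8) := Real.one_le_sqrt.2 (by linarith)
  unfold levyNum; linarith

lemma levyRadius_pos {κ : ℝ} (hκ : 0 ≤ κ) {n : ℕ} (hn : 1 ≤ n) : 0 < levyRadius κ n := by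
  have h1 := one_le_levyNum hκ n
  have h2 : (0:ℝ) < n := by exact_mod_cast hn
  unfold levyRadius; positivity

lemma levyRadius_spec {κ : ℝ} (hκ : 0 ≤ κ) {n : ℕ} (hn : 1 ≤ n) :
    (Real.sqrt (8 * Real.log (Real.exp 1 / levyRadius κ n)) + 2 * κ) /
      Real.sqrt (n * levyRadius κ n) ≤ levyRadius κ n := by
  have hr := one_le_levyNum hκ n
  have hr0 : 0 < levyNum κ n := by linarith
  have hn0 : (0:ℝ) < n := by exact_mod_cast hn
  have he := levyRadius_pos hκ hn
  rw [div_le_iff₀ (by positivity)]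
  have hlog : Real.log (Real.exp 1 / levyRadius κ n) ≤ 1 + Real.log n / 3 := by
    rw [Real.log_div (Real.exp_pos 1).ne' he.ne', Real.log_exp, levyRadius,
      Real.log_mul (by positivity) (by positivity), Real.log_rpow hn0, Real.log_rpow hr0]
    have := Real.log_nonneg hr
    linarith
  -- The choice of `r` makes the right-hand side exactly `r`: `ε² (n ε) = n ε³ = r²`.
  have hprod : levyRadius κ n * Real.sqrt (n * levyRadius κ n) = levyNum κ n := by
    have hcube : levyRadius κ n ^ 3 * n = levyNum κ n ^ 2 := by
      have h1 : ((n : ℝ) ^ (-(1:ℝ)/3)) ^ 3 = (n : ℝ)⁻¹ := by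
        rw [← Real.rpow_natCast, ← Real.rpow_mul hn0.le, ← Real.rpow_neg_one]; norm_num
      have h2 : (levyNum κ n ^ ((2:ℝ)/3)) ^ 3 = levyNum κ n ^ 2 := by
        rw [← Real.rpow_natCast, ← Real.rpow_mul hr0.le, ← Real.rpow_natCast]; norm_num
      rw [levyRadius, mul_pow, h1, h2]; field_simp
    rw [← pow_left_inj₀ (by positivity) hr0.le two_ne_zero, mul_pow,
      Real.sq_sqrt (by positivity), ← hcube]
    ring
  rw [hprod, levyNum]
  gcongr
  linarith

lemma tendsto_remainder {κ : ℝ} (hκ : 0 ≤ κ) :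
    Tendsto (fun n : ℕ => (levyRadius κ n -
      (8/3 : ℝ) ^ ((1:ℝ)/3) * (Real.log n / n) ^ ((1:ℝ)/3)) * (n : ℝ) ^ ((1:ℝ)/3))
      atTop (nhds 0) := by
  have hlog : Tendsto (fun n : ℕ => Real.log n) atTop atTop :=
    Real.tendsto_log_atTop.comp tendsto_natCast_atTop_atTop
  have hL : Tendsto (fun n : ℕ => Real.sqrt (8/3 * Real.log n)) atTop atTop :=
    Real.tendsto_sqrt_atTop.comp (hlog.const_mul_atTop (by norm_num))
  have hupper : Tendsto (fun n : ℕ => (Real.sqrt 8 + 2 * κ) *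
      Real.sqrt (8/3 * Real.log n) ^ (-((1:ℝ)/3))) atTop (nhds 0) := by
    have h := ((tendsto_rpow_neg_atTop (y := (1:ℝ)/3) (by norm_num)).comp hL).const_mul
      (Real.sqrt 8 + 2 * κ)
    simpa [Function.comp_def] using h
  have hkey : ∀ᶠ n : ℕ in atTop, (levyRadius κ n -
      (8/3 : ℝ) ^ ((1:ℝ)/3) * (Real.log n / n) ^ ((1:ℝ)/3)) * (n : ℝ) ^ ((1:ℝ)/3) =
      levyNum κ n ^ ((2:ℝ)/3) - Real.sqrt (8/3 * Real.log n) ^ ((2:ℝ)/3) := by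
    filter_upwards [eventually_ge_atTop 1] with n hn
    have hn0 : (0:ℝ) < n := by exact_mod_cast hn
    have hl := Real.log_natCast_nonneg n
    have h1 : (n : ℝ) ^ (-(1:ℝ)/3) * (n : ℝ) ^ ((1:ℝ)/3) = 1 := by
      rw [← Real.rpow_add hn0]; norm_num
    have h2 : (Real.log n / n) ^ ((1:ℝ)/3) * (n : ℝ) ^ ((1:ℝ)/3) = Real.log n ^ ((1:ℝ)/3) := by
      rw [← Real.mul_rpow (by positivity) hn0.le]; congr 1; field_simp
    have h3 : Real.sqrt (8/3 * Real.log n) ^ ((2:ℝ)/3) =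
        (8/3 : ℝ) ^ ((1:ℝ)/3) * Real.log n ^ ((1:ℝ)/3) := by
      rw [Real.sqrt_eq_rpow, ← Real.rpow_mul (by positivity),
        ← Real.mul_rpow (by norm_num) hl]
      norm_num
    rw [h3, ← h2, levyRadius]
    linear_combination levyNum κ n ^ ((2:ℝ)/3) * h1
  rw [tendsto_congr' hkey]
  refine tendsto_of_tendsto_of_tendsto_of_le_of_le' tendsto_const_nhds hupper ?_ ?_
  · refine Eventually.of_forall fun n => ?_
    have h : Real.sqrt (8/3 * Real.log n) ≤ levyNum κ n := by
      have : Real.sqrt (8/3 * Real.log n) ≤ Real.sqrt (8/3 * Real.log n + 8) :=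
        Real.sqrt_le_sqrt (by linarith)
      unfold levyNum; linarith
    exact sub_nonneg.2 (Real.rpow_le_rpow (Real.sqrt_nonneg _) h (by norm_num))
  · filter_upwards [hL.eventually_gt_atTop 0] with n hpos
    have hl := Real.log_natCast_nonneg n
    set L := Real.sqrt (8/3 * Real.log n) with hLdef
    set K := Real.sqrt 8 + 2 * κ with hK
    have hK0 : 0 ≤ K := by positivity
    have hle : levyNum κ n ≤ L * (1 + K / L) := by
      have h1 : Real.sqrt (8/3 * Real.log n + 8) ≤ L + Real.sqrt 8 :=
        Real.sqrt_le_iff.2 ⟨by positivity, by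
          have e1 : L ^ 2 = 8/3 * Real.log n := Real.sq_sqrt (by positivity)
          have e2 : Real.sqrt 8 ^ 2 = 8 := Real.sq_sqrt (by norm_num)
          nlinarith [mul_nonneg hpos.le (Real.sqrt_nonneg 8)]⟩
      have h2 : L * (1 + K / L) = L + K := by field_simp
      rw [h2, levyNum, hK]; linarith
    have hone : 1 ≤ 1 + K / L := le_add_of_nonneg_right (by positivity)
    have h1 : levyNum κ n ^ ((2:ℝ)/3) ≤ L ^ ((2:ℝ)/3) * (1 + K / L) := by
      calc levyNum κ n ^ ((2:ℝ)/3) ≤ (L * (1 + K / L)) ^ ((2:ℝ)/3) :=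
            Real.rpow_le_rpow (by linarith [one_le_levyNum hκ n]) hle (by norm_num)
        _ = L ^ ((2:ℝ)/3) * (1 + K / L) ^ ((2:ℝ)/3) := Real.mul_rpow hpos.le (by linarith)
        _ ≤ L ^ ((2:ℝ)/3) * (1 + K / L) := by
            gcongr
            -- `z ^ (2/3) ≤ z` for `z ≥ 1`
            exact Real.rpow_le_self_of_one_le hone (by norm_num)
    have h2 : L ^ ((2:ℝ)/3) * (1 + K / L) = L ^ ((2:ℝ)/3) + K * L ^ (-((1:ℝ)/3)) := by
      have : L ^ (-((1:ℝ)/3)) = L ^ ((2:ℝ)/3) / L := by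
        rw [← Real.rpow_sub_one hpos.ne']; norm_num
      rw [this]; ring
    linarith

/-- deterministic part of Theorem `Upper Bounds GGiso`: for any data
path `Y`, the band `(ℓ̂, û)` satisfies
`û(x) - ℓ̂(x+ε) ≤ ((8 log(e/ε))^{1/2} + 2κ)/(nε)^{1/2}`; consequently, if
`ℓ̂ ≤ û` on `[0,1]`, then `D_ε(ℓ̂, û)` is bounded by the same quantity for every
`ε ∈ (0,1]`, and `d_L(ℓ̂, û) ≤ (8/3)^{1/3} (log n / n)^{1/3} + c_n` for universal
constants `c_n` (depending only on `κ`) with `c_n n^{1/3} → 0`. -/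
theorem stmt3 (κ : ℝ) (hκ : 0 ≤ κ) :
    (∀ n : ℕ, 1 ≤ n → ∀ Y : ℝ → ℝ, ∀ ε ∈ Set.Ioc (0:ℝ) 1,
      ∀ x ∈ Set.Icc (0:ℝ) (1 - ε),
        uhatIso n κ Y x - lhatIso n κ Y (x + ε) ≤
          (((Real.sqrt (8 * Real.log (Real.exp 1 / ε)) + 2 * κ) /
            Real.sqrt (n * ε) : ℝ) : EReal)) ∧
    (∀ n : ℕ, 1 ≤ n → ∀ Y : ℝ → ℝ,
      (∀ x ∈ Set.Icc (0:ℝ) 1, lhatIso n κ Y x ≤ uhatIso n κ Y x) →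
      ∀ ε ∈ Set.Ioc (0:ℝ) 1,
        Deps ε (lhatIso n κ Y) (uhatIso n κ Y) ≤
          ENNReal.ofReal ((Real.sqrt (8 * Real.log (Real.exp 1 / ε)) + 2 * κ) /
            Real.sqrt (n * ε))) ∧
    (∃ c : ℕ → ℝ,
      Tendsto (fun n : ℕ => c n * (n : ℝ) ^ ((1:ℝ)/3)) atTop (nhds 0) ∧
      ∀ n : ℕ, 1 ≤ n → ∀ Y : ℝ → ℝ,
        (∀ x ∈ Set.Icc (0:ℝ) 1, lhatIso n κ Y x ≤ uhatIso n κ Y x) →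
        dLevy (lhatIso n κ Y) (uhatIso n κ Y) ≤
          ENNReal.ofReal ((8/3 : ℝ) ^ ((1:ℝ)/3) * (Real.log n / n) ^ ((1:ℝ)/3) + c n)) := by
  refine ⟨?_, ?_, fun n => levyRadius κ n -
    (8/3 : ℝ) ^ ((1:ℝ)/3) * (Real.log n / n) ^ ((1:ℝ)/3), tendsto_remainder hκ, ?_⟩
  · intro n _ Y ε hε x hx
    refine (EReal.sub_le_sub (uhat_le n κ Y hε.1 (by linarith [hx.2]))
      (le_lhat n κ Y hε.1 hx.1)).trans ?_
    rw [two_mul_halfWidth, ← EReal.coe_sub, EReal.coe_le_coe_iff]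
    linarith
  · intro n _ Y hlu ε hε
    exact sInf_le ⟨_, by positivity, rfl, fun x hx => band_bounds n hκ Y hlu hε.1 le_rfl hx⟩
  · intro n hn Y hlu
    refine sInf_le ⟨levyRadius κ n, levyRadius_pos hκ hn, by congr 1; ring, fun x hx => ?_⟩
    exact band_bounds n hκ Y hlu (levyRadius_pos hκ hn) (levyRadius_spec hκ hn) hx
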